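/- For all integers n and d with n ≥ d ≥ 1, the maximum size A∘(n,d) of a subset of S_n whose distinct elements are at pairwise translocation distance at least d satisfies A∘(n,d) ≥ (n−d+1)! / C(n,d−1), where C(n,d−1) is the binomial coefficient. -/

import Mathlib

/-- `IsMove l l'` holds if `l'` is obtained from `l` by a single translocation:
removing the element at position `i` and reinserting it at position `j`. -/
def IsMove {α : Type*} (l l' : List α) : Prop :=
  ∃ i j : Fin l.length, l' = (l.eraseIdx i).insertIdx j (l.get i)

/-- `ReachIn step m l l'` holds if `l'` can be obtained from `l` by `m` applications
of the relation `step`. -/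
def ReachIn {α : Type*} (step : List α → List α → Prop) : ℕ → List α → List α → Prop
  | 0, l, l' => l = l'
  | m+1, l, l' => ∃ l'', step l l'' ∧ ReachIn step m l'' l'

/-- The one-line notation of a permutation of `Fin n`. -/
def oneLine {n : ℕ} (σ : Equiv.Perm (Fin n)) : List (Fin n) := List.ofFn σ

/-- The translocation distance: the minimum number of translocations transforming
the one-line notation of `σ` into that of `π`. -/
noncomputable def translocDist {n : ℕ} (σ π : Equiv.Perm (Fin n)) : ℕ :=
  sInf {m | ReachIn IsMove m (oneLine σ) (oneLine π)}

/-- `maxTranslocCode n d` is the maximum size of a subset of the symmetric group on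
`n` elements whose distinct elements are at pairwise translocation distance at least `d`. -/
noncomputable def maxTranslocCode (n d : ℕ) : ℕ :=
  sSup {M | ∃ C : Finset (Equiv.Perm (Fin n)), C.card = M ∧
    ∀ σ ∈ C, ∀ π ∈ C, σ ≠ π → d ≤ translocDist σ π}

/-- `σ` and `π` have a common subsequence of length `k`. -/
def CommonSub {n : ℕ} (k : ℕ) (σ π : Equiv.Perm (Fin n)) : Prop :=
  ∃ f g : Fin k ↪o Fin n, ∀ x, σ (f x) = π (g x)

theorem isMove_cons {α : Type*} (a : α) {l l' : List α} (h : IsMove l l') :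
    IsMove (a :: l) (a :: l') := by
  obtain ⟨i, j, rfl⟩ := h
  exact ⟨i.succ, j.succ, by simp⟩

theorem reachIn_cons {α : Type*} (a : α) (m : ℕ) : ∀ {l l' : List α},
    ReachIn IsMove m l l' → ReachIn IsMove m (a :: l) (a :: l') := by
  induction m with
  | zero => intro l l' h; simp only [ReachIn] at h ⊢; rw [h]
  | succ m ih =>
    rintro l l' ⟨l'', h, h'⟩
    exact ⟨a :: l'', isMove_cons a h, ih h'⟩

theorem reachIn_trans {α : Type*} (m m' : ℕ) : ∀ {l l' l'' : List α},
    ReachIn IsMove m l l' → ReachIn IsMove m' l' l'' → ∃ r, ReachIn IsMove r l l'' := by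
  induction m with
  | zero => intro l l' l'' h h'; simp only [ReachIn] at h; subst h; exact ⟨m', h'⟩
  | succ m ih =>
    rintro l l' l'' ⟨t, h, h1⟩ h2
    obtain ⟨r, hr⟩ := ih h1 h2
    exact ⟨r + 1, t, h, hr⟩

theorem reachIn_of_perm {α : Type*} {l l' : List α} (h : l.Perm l') :
    ∃ m, ReachIn IsMove m l l' := by
  induction h with
  | nil => exact ⟨0, rfl⟩
  | cons a _ ih => obtain ⟨m, hm⟩ := ih; exact ⟨m, reachIn_cons a m hm⟩
  | swap x y l =>
    refine ⟨1, x :: y :: l, ⟨⟨0, by simp⟩, ⟨1, by simp⟩, ?_⟩, rfl⟩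
    simp
  | trans _ _ ih1 ih2 =>
    obtain ⟨m, hm⟩ := ih1
    obtain ⟨m', hm'⟩ := ih2
    exact reachIn_trans m m' hm hm'

theorem sublist_eraseIdx {α : Type*} : ∀ {s l : List α} (j : ℕ), s.Sublist l →
    ∃ t : List α, t.Sublist s ∧ t.Sublist (l.eraseIdx j) ∧ s.length ≤ t.length + 1 := by
  intro s l j h
  induction h generalizing j with
  | slnil => exact ⟨[], by simp⟩
  | @cons s l a h ih =>
    cases j with
    | zero => exact ⟨s, List.Sublist.refl s, by simpa using h, by simp⟩
    | succ j =>
      obtain ⟨t, h1, h2, h3⟩ := ih j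
      exact ⟨t, h1, by simpa using h2.cons a, h3⟩
  | @cons_cons s l a h ih =>
    cases j with
    | zero => exact ⟨s, by simp, by simpa using h, by simp⟩
    | succ j =>
      obtain ⟨t, h1, h2, h3⟩ := ih j
      exact ⟨a :: t, h1.cons_cons a, by simpa using h2.cons_cons a, by simpa using h3⟩

theorem reachIn_common {α : Type*} (m : ℕ) : ∀ {l l' : List α},
    ReachIn IsMove m l l' →
    ∃ s : List α, s.Sublist l ∧ s.Sublist l' ∧ l.length ≤ s.length + m := by
  induction m with
  | zero =>
    intro l l' h; simp only [ReachIn] at h; subst h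
    exact ⟨l, List.Sublist.refl l, List.Sublist.refl l, by simp⟩
  | succ m ih =>
    rintro l l' ⟨l'', ⟨i, j, rfl⟩, h⟩
    obtain ⟨s, h1, h2, h3⟩ := ih h
    obtain ⟨t, ht1, ht2, ht3⟩ := sublist_eraseIdx j h1
    rw [List.eraseIdx_insertIdx_self] at ht2
    refine ⟨t, ht2.trans (List.eraseIdx_sublist _ _), ht1.trans h2, ?_⟩
    have hi := i.2
    have hj := j.2
    have : (l.eraseIdx i).length = l.length - 1 := by
      rw [List.length_eraseIdx]; simp
    rw [List.length_insertIdx_of_le_length (by omega)] at h3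
    omega

theorem sublist_oneLine {n k : ℕ} {σ : Equiv.Perm (Fin n)} {s : List (Fin n)}
    (hs : s.length = k) (h : s.Sublist (oneLine σ)) :
    ∃ f : Fin k ↪o Fin n, ∀ x, σ (f x) = s.get (x.cast hs.symm) := by
  subst hs
  obtain ⟨f, hf⟩ := List.sublist_iff_exists_fin_orderEmbedding_get_eq.1 h
  refine ⟨f.trans (Fin.castOrderIso (by simp [oneLine])).toOrderEmbedding, fun x => ?_⟩
  have := hf x
  simp only [oneLine, List.get_ofFn] at this
  exact this.symm

theorem commonSub_of_dist_lt {n d : ℕ} (hd : 1 ≤ d) (hdn : d ≤ n)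
    {σ π : Equiv.Perm (Fin n)} (h : translocDist σ π < d) :
    CommonSub (n - d + 1) σ π := by
  have hp : (oneLine σ).Perm (oneLine π) := by
    apply (List.perm_ext_iff_of_nodup _ _).2
    · intro a
      simp only [oneLine, List.mem_ofFn]
      exact ⟨fun _ => π.surjective a, fun _ => σ.surjective a⟩
    · exact List.nodup_ofFn.2 σ.injective
    · exact List.nodup_ofFn.2 π.injective
  have hm : ReachIn IsMove (translocDist σ π) (oneLine σ) (oneLine π) :=
    Nat.sInf_mem (reachIn_of_perm hp)
  obtain ⟨s, h1, h2, h3⟩ := reachIn_common _ hm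
  have hl : (oneLine σ).length = n := by simp [oneLine]
  have hk : (s.take (n - d + 1)).length = n - d + 1 := by
    rw [List.length_take]; omega
  obtain ⟨f, hf⟩ := sublist_oneLine hk ((List.take_sublist _ _).trans h1)
  obtain ⟨g, hg⟩ := sublist_oneLine hk ((List.take_sublist _ _).trans h2)
  exact ⟨f, g, fun x => (hf x).trans (hg x).symm⟩

open Classical in
theorem card_containing {n k : ℕ} (s : Fin k ↪ Fin n) :
    k.factorial * (Finset.univ.filter
      (fun π : Equiv.Perm (Fin n) => ∃ g : Fin k ↪o Fin n, ∀ x, s x = π (g x))).card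
      ≤ n.factorial := by
  set P := Finset.univ.filter
      (fun π : Equiv.Perm (Fin n) => ∃ g : Fin k ↪o Fin n, ∀ x, s x = π (g x)) with hP
  have h1 : ((Finset.univ : Finset (Equiv.Perm (Fin k))) ×ˢ P).card ≤
      (Finset.univ : Finset (Equiv.Perm (Fin n))).card := by
    apply Finset.card_le_card_of_injOn (fun p => p.1.viaFintypeEmbedding s * p.2)
    · intro p _; simp
    · rintro ⟨τ, π⟩ hp ⟨τ', π'⟩ hp' heq
      simp only [Finset.coe_product, Set.mem_prod, Finset.mem_coe, hP, Finset.mem_filter,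
        Finset.mem_univ, true_and, Finset.coe_univ, Set.mem_univ] at hp hp'
      obtain ⟨g, hg⟩ := hp
      obtain ⟨g', hg'⟩ := hp'
      simp only at heq
      have key : ∀ x, g (τ⁻¹ x) = g' (τ'⁻¹ x) := by
        intro x
        apply (τ.viaFintypeEmbedding s * π).injective
        conv_rhs => rw [heq]
        simp only [Equiv.Perm.mul_apply, ← hg, ← hg', Equiv.Perm.viaFintypeEmbedding_apply_image]
        simp
      have hr : Set.range g = Set.range g' := by
        ext y
        constructor
        · rintro ⟨x, rfl⟩
          exact ⟨τ'⁻¹ (τ x), by rw [← key]; simp⟩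
        · rintro ⟨x, rfl⟩
          exact ⟨τ⁻¹ (τ' x), by rw [key]; simp⟩
      have hgg : g = g' := by
        have := (StrictMono.range_inj g.strictMono g'.strictMono).1 hr
        exact DFunLike.coe_injective this
      subst hgg
      have hτ : τ = τ' := by
        rw [← inv_inj]
        ext x
        rw [g.injective (key x)]
      subst hτ
      have := mul_left_cancel heq
      rw [this]
  rw [Finset.card_product, Finset.card_univ, Finset.card_univ, Fintype.card_perm,
    Fintype.card_perm, Fintype.card_fin, Fintype.card_fin] at h1
  exact h1

open Classical in
theorem card_ball {n k : ℕ} (σ : Equiv.Perm (Fin n)) :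
    k.factorial * (Finset.univ.filter (fun π => CommonSub k σ π)).card
      ≤ n.choose k * n.factorial := by
  let T : Finset (Fin n) → Finset (Equiv.Perm (Fin n)) := fun S =>
    Finset.univ.filter (fun π => ∃ f : Fin k ↪o Fin n, Finset.univ.map f.toEmbedding = S ∧
      ∃ g : Fin k ↪o Fin n, ∀ x, σ (f x) = π (g x))
  have hT : ∀ S ∈ Finset.powersetCard k (Finset.univ : Finset (Fin n)),
      k.factorial * (T S).card ≤ n.factorial := by
    intro S hS
    have hc := (Finset.mem_powersetCard.1 hS).2
    refine le_trans (Nat.mul_le_mul_left _ (Finset.card_le_card ?_))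
      (card_containing ((S.orderEmbOfFin hc).toEmbedding.trans σ.toEmbedding))
    intro π hπ
    simp only [T, Finset.mem_filter, Finset.mem_univ, true_and] at hπ ⊢
    obtain ⟨f, hf, g, hg⟩ := hπ
    refine ⟨g, fun x => ?_⟩
    have : f = S.orderEmbOfFin hc := by
      apply Finset.orderEmbOfFin_unique'
      intro x
      rw [← hf]; simp
    rw [← hg, this]; rfl
  calc k.factorial * (Finset.univ.filter (fun π => CommonSub k σ π)).card
      ≤ k.factorial * ((Finset.powersetCard k (Finset.univ : Finset (Fin n))).biUnion T).card := by
        apply Nat.mul_le_mul_left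
        apply Finset.card_le_card
        intro π hπ
        simp only [Finset.mem_filter, Finset.mem_univ, true_and] at hπ
        obtain ⟨f, g, h⟩ := hπ
        rw [Finset.mem_biUnion]
        refine ⟨Finset.univ.map f.toEmbedding, ?_, ?_⟩
        · simp [Finset.mem_powersetCard]
        · simp only [T, Finset.mem_filter, Finset.mem_univ, true_and]
          exact ⟨f, rfl, g, h⟩
    _ ≤ k.factorial * ∑ S ∈ Finset.powersetCard k (Finset.univ : Finset (Fin n)), (T S).card :=
        Nat.mul_le_mul_left _ Finset.card_biUnion_le
    _ = ∑ S ∈ Finset.powersetCard k (Finset.univ : Finset (Fin n)), k.factorial * (T S).card :=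
        Finset.mul_sum _ _ _
    _ ≤ ∑ S ∈ Finset.powersetCard k (Finset.univ : Finset (Fin n)), n.factorial :=
        Finset.sum_le_sum hT
    _ = n.choose k * n.factorial := by simp

open Classical in
theorem exists_code {n k : ℕ} (hk : k ≤ n) : ∃ C : Finset (Equiv.Perm (Fin n)),
    (∀ σ ∈ C, ∀ π ∈ C, σ ≠ π → ¬ CommonSub k σ π) ∧
    k.factorial ≤ C.card * n.choose k := by
  let F : Finset (Finset (Equiv.Perm (Fin n))) :=
    Finset.univ.filter (fun C => ∀ σ ∈ C, ∀ π ∈ C, σ ≠ π → ¬ CommonSub k σ π)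
  obtain ⟨C, hC, hmax⟩ := F.exists_max_image Finset.card ⟨∅, by simp [F]⟩
  have hC' : ∀ σ ∈ C, ∀ π ∈ C, σ ≠ π → ¬ CommonSub k σ π := by simpa [F] using hC
  refine ⟨C, hC', ?_⟩
  have hcov : ∀ π, ∃ σ ∈ C, CommonSub k σ π := by
    intro π
    by_cases hπ : π ∈ C
    · exact ⟨π, hπ, Fin.castLEOrderEmb hk, Fin.castLEOrderEmb hk, fun _ => rfl⟩
    · by_contra! hno
      have hmem : insert π C ∈ F := by
        simp only [F, Finset.mem_filter, Finset.mem_univ, true_and]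
        intro a ha b hb hab hR
        rcases Finset.mem_insert.1 ha with rfl | ha1 <;>
          rcases Finset.mem_insert.1 hb with rfl | hb1
        · exact hab rfl
        · obtain ⟨f, g, h⟩ := hR
          exact hno b hb1 ⟨g, f, fun x => (h x).symm⟩
        · exact hno a ha1 hR
        · exact hC' a ha1 b hb1 hab hR
      have := hmax _ hmem
      rw [Finset.card_insert_of_notMem hπ] at this
      omega
  have h1 : n.factorial ≤
      ∑ σ ∈ C, (Finset.univ.filter (fun π => CommonSub k σ π)).card := by
    calc n.factorial = (Finset.univ : Finset (Equiv.Perm (Fin n))).card := by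
          rw [Finset.card_univ, Fintype.card_perm, Fintype.card_fin]
      _ ≤ (C.biUnion (fun σ => Finset.univ.filter (fun π => CommonSub k σ π))).card := by
          apply Finset.card_le_card
          intro π _
          obtain ⟨σ, hσ, h⟩ := hcov π
          exact Finset.mem_biUnion.2 ⟨σ, hσ, by simpa using h⟩
      _ ≤ _ := Finset.card_biUnion_le
  have h2 : k.factorial * n.factorial ≤ (C.card * n.choose k) * n.factorial := by
    calc k.factorial * n.factorial
        ≤ k.factorial * ∑ σ ∈ C, (Finset.univ.filter (fun π => CommonSub k σ π)).card :=
          Nat.mul_le_mul_left _ h1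
      _ = ∑ σ ∈ C, k.factorial * (Finset.univ.filter (fun π => CommonSub k σ π)).card :=
          Finset.mul_sum _ _ _
      _ ≤ ∑ σ ∈ C, n.choose k * n.factorial := Finset.sum_le_sum fun σ _ => card_ball σ
      _ = _ := by simp [mul_assoc]
  exact Nat.le_of_mul_le_mul_right h2 n.factorial_pos

/-- Gilbert–Varshamov-type bound: for all `n ≥ d ≥ 1`,
`A∘(n,d) ≥ (n−d+1)! / C(n,d−1)`. -/
theorem maxTranslocCode_lower_bound (n d : ℕ) (hd : 1 ≤ d) (hdn : d ≤ n) :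
    ((n - d + 1).factorial : ℝ) / (n.choose (d - 1) : ℝ) ≤ (maxTranslocCode n d : ℝ) := by
  obtain ⟨C, hC, hcard⟩ := exists_code (n := n) (k := n - d + 1) (by omega)
  have hle : C.card ≤ maxTranslocCode n d := by
    apply le_csSup
    · refine ⟨Fintype.card (Equiv.Perm (Fin n)), ?_⟩
      rintro M ⟨D, rfl, _⟩
      exact Finset.card_le_univ D
    · refine ⟨C, rfl, fun σ hσ π hπ hne => ?_⟩
      by_contra hlt
      exact hC σ hσ π hπ hne (commonSub_of_dist_lt hd hdn (not_le.1 hlt))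
  have hch : n.choose (n - d + 1) = n.choose (d - 1) := by
    rw [← Nat.choose_symm (show d - 1 ≤ n by omega)]
    congr 1; omega
  rw [hch] at hcard
  have hpos : (0 : ℝ) < (n.choose (d - 1) : ℝ) := by
    exact_mod_cast Nat.choose_pos (by omega)
  rw [div_le_iff₀ hpos]
  exact_mod_cast hcard.trans (Nat.mul_le_mul_right _ hle)
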